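/- Let λ : ℤ₊ → ℝ satisfy (UB) and let N ≥ 1. The function (y,x) ↦ 𝔥_N(y) on W^{N,N+1} is harmonic for the two-level kernel: for all t ≥ 0 and (y,x) ∈ W^{N,N+1}, Σ_{(y',x') ∈ W^{N,N+1}} U_t^{N,N+1}[(y,x),(y',x')] · 𝔥_N(y') = 𝔥_N(y), the series converging absolutely. -/

import Mathlib

open Complex MeasureTheory Finset
open scoped Real ComplexOrder

/-- ψ_x(w) = ∏_{k=0}^{x} λ(k)/(λ(k)−w). -/
noncomputable def psiF (lam : ℕ → ℝ) (x : ℕ) (w : ℂ) : ℂ :=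
  ∏ k ∈ Finset.range (x + 1), (lam k : ℂ) / ((lam k : ℂ) - w)

/-- p_x(w) = ∏_{k=0}^{x−1} (λ(k)−w)/λ(k). -/
noncomputable def pF (lam : ℕ → ℝ) (x : ℕ) (w : ℂ) : ℂ :=
  ∏ k ∈ Finset.range x, (((lam k : ℂ) - w) / (lam k : ℂ))

/-- e^{tL}(x,y) := −(1/λ(y))·(1/(2πi)) ∮_{|w|=R} ψ_y(w) p_x(w) e^{−tw} dw,
the contour being the counterclockwise circle of radius R centred at 0. -/
noncomputable def eL (lam : ℕ → ℝ) (R t : ℝ) (x y : ℕ) : ℂ :=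
  -(1 / (lam y : ℂ)) * ((2 * (Real.pi : ℂ) * Complex.I)⁻¹ *
    ∮ w in C(0, R), psiF lam y w * pF lam x w * Complex.exp (-(t : ℂ) * w))

/-- y ≺ x : interlacing, x_1 ≤ y_1 < x_2 ≤ y_2 < ⋯ ≤ y_N < x_{N+1}.
(Membership of (y,x) in W^{N,N+1} is exactly this condition.) -/
def Interlace {N : ℕ} (y : Fin N → ℕ) (x : Fin (N + 1) → ℕ) : Prop :=
  ∀ i : Fin N, x i.castSucc ≤ y i ∧ y i < x i.succ

instance {N : ℕ} (y : Fin N → ℕ) (x : Fin (N + 1) → ℕ) : Decidable (Interlace y x) :=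
  inferInstanceAs (Decidable (∀ i : Fin N, x i.castSucc ≤ y i ∧ y i < x i.succ))

/-- The two-level Karlin–McGregor block determinant kernel
U_t^{N,N+1}[(y,x),(y',x')] = det [[A, B],[C, D]] with
A_{ij} = e^{tL}(x_i,x'_j), B_{ij} = λ(y'_j)⁻¹ (Σ_{z=0}^{y'_j} e^{tL}(x_i,z) − 1(j ≥ i)),
C_{ij} = λ(y_i)(e^{tL}(y_i,x'_j) − e^{tL}(y_i+1,x'_j)), D_{ij} = e^{tL}(y_i,y'_j). -/
noncomputable def Ut (lam : ℕ → ℝ) (R t : ℝ) (N : ℕ)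
    (y : Fin N → ℕ) (x : Fin (N + 1) → ℕ)
    (y' : Fin N → ℕ) (x' : Fin (N + 1) → ℕ) : ℂ :=
  (Matrix.fromBlocks
    (Matrix.of fun i j => eL lam R t (x i) (x' j))
    (Matrix.of fun (i : Fin (N + 1)) (j : Fin N) =>
      (1 / (lam (y' j) : ℂ)) *
        ((∑ z ∈ Finset.range (y' j + 1), eL lam R t (x i) z)
          - if (i : ℕ) ≤ (j : ℕ) then 1 else 0))
    (Matrix.of fun (i : Fin N) (j : Fin (N + 1)) =>
      (lam (y i) : ℂ) * (eL lam R t (y i) (x' j) - eL lam R t (y i + 1) (x' j)))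
    (Matrix.of fun i j => eL lam R t (y i) (y' j))).det

/-- 𝔥_N, defined recursively: 𝔥_1 ≡ 1 and 𝔥_{N+1}(x) = Σ_{y ≺ x} ∏ λ(y_i)⁻¹ 𝔥_N(y)
(so 𝔥_1(x) = 1 since the empty interlacing condition is vacuous and the unique
y : Fin 0 → ℕ contributes the empty product). -/
noncomputable def hfun (lam : ℕ → ℝ) : (N : ℕ) → (Fin N → ℕ) → ℝ
  | 0, _ => 1
  | (N + 1), x => ∑' y : { y : Fin N → ℕ // Interlace y x },
      (∏ i, (lam (y.1 i))⁻¹) * hfun lam N y.1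

/-!
Write `P = e^{tL}`. Three properties of `P` are all that matters: it decays superexponentially, its
rows sum to one, and `λ(x) (F_x(z) - F_{x+1}(z)) = λ(z) P(x, z)` for its distribution functions
`F_x`. They are read off from the contour integral for the tails `1 - F_x`: enlarging the contour
gives the decay, and for the full tail the residue at `0` gives the total mass.

Fix `y'` and sum the two-level determinant over all `x'` interlacing with `y'`. The coordinates of
`x'` range over disjoint cells, so the sum may be taken column by column, and the columns become
increments of distribution functions. Row and column operations then collapse the block determinant
to the Karlin–McGregor determinant `det P(y_i, y'_j)`.

It remains to see that `𝔥_N` is harmonic for that determinant, by induction on `N`. Expand `𝔥_{N+1}`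
into its sum over the `y` interlacing with `x'` and sum over `x'` first, as before: telescoping the
third property turns `det P(x_i, x'_j)` into a sum, over the `u` interlacing with `x`, of
determinants `det P(u_i, y_j)`. Since `𝔥_N` grows at most exponentially, the decay of `P` makes all
series converge absolutely, so that sums may be interchanged.
-/

open Matrix Filter Asymptotics Topology

section Series

variable {ι : Type*} [Fintype ι] {α : ι → Type*}

lemma summable_pi_prod_of_nonneg {f : ∀ i, α i → ℝ} (hf₀ : ∀ i a, 0 ≤ f i a)
    (hf : ∀ i, Summable (f i)) : Summable fun x : ∀ i, α i => ∏ i, f i (x i) := by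
  classical
  refine summable_of_sum_le (c := ∏ i, ∑' a, f i a)
    (fun x => Finset.prod_nonneg fun i _ => hf₀ i _) fun u => ?_
  calc ∑ x ∈ u, ∏ i, f i (x i)
      ≤ ∑ x ∈ Fintype.piFinset fun i => u.image (· i), ∏ i, f i (x i) :=
        Finset.sum_le_sum_of_subset_of_nonneg
          (fun x hx => Fintype.mem_piFinset.2 fun i => Finset.mem_image_of_mem _ hx)
          fun x _ _ => Finset.prod_nonneg fun i _ => hf₀ i _
    _ = ∏ i, ∑ a ∈ u.image (· i), f i a := (Finset.prod_univ_sum _ _).symm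
    _ ≤ ∏ i, ∑' a, f i a := Finset.prod_le_prod
        (fun i _ => Finset.sum_nonneg fun a _ => hf₀ i a)
        fun i _ => (hf i).sum_le_tsum _ fun a _ => hf₀ i a

lemma tendsto_piFinset_atTop [DecidableEq ι] :
    Tendsto (Fintype.piFinset : (∀ i, Finset (α i)) → Finset (∀ i, α i)) atTop atTop := by
  classical
  refine tendsto_atTop.2 fun u => ?_
  filter_upwards [eventually_ge_atTop fun i => u.image (· i)] with s hs x hx
  exact Fintype.mem_piFinset.2 fun i => hs i (Finset.mem_image_of_mem _ hx)

lemma hasSum_continuousMultilinearMap_apply {ι 𝕜 F : Type*} [Finite ι] {α E : ι → Type*}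
    [NontriviallyNormedField 𝕜] [∀ i, NormedAddCommGroup (E i)] [∀ i, NormedSpace 𝕜 (E i)]
    [NormedAddCommGroup F] [NormedSpace 𝕜 F] [CompleteSpace F] (f : ContinuousMultilinearMap 𝕜 E F)
    {c : ∀ i, α i → E i} {S : ∀ i, E i} (hc : ∀ i, HasSum (c i) (S i))
    (hcn : ∀ i, Summable fun a => ‖c i a‖) :
    HasSum (fun x : ∀ i, α i => f fun i => c i (x i)) (f S) := by
  classical
  cases nonempty_fintype ι
  have hsum : Summable fun x : ∀ i, α i => f fun i => c i (x i) :=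
    ((summable_pi_prod_of_nonneg (fun _ _ => norm_nonneg _) hcn).mul_left ‖f‖).of_norm_bounded
      fun x => f.le_opNorm _
  have hboxes : Tendsto (fun s : ∀ i, Finset (α i) => f fun i => ∑ a ∈ s i, c i a) atTop
      (𝓝 (f S)) := by
    refine (f.cont.tendsto S).comp (tendsto_pi_nhds.2 fun i => (hc i).comp ?_)
    exact (Function.monotone_eval i).tendsto_atTop_atTop fun b =>
      ⟨Function.update (fun _ => ∅) i b, by simp⟩
  simp only [f.map_sum_finset] at hboxes
  have htsum := tendsto_nhds_unique (hsum.hasSum.comp tendsto_piFinset_atTop) hboxes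
  exact htsum ▸ hsum.hasSum

variable [DecidableEq ι]

lemma hasSum_det_of_columns {f : ι → ∀ j, α j → ℂ} {S : Matrix ι ι ℂ}
    (hf : ∀ i j, HasSum (f i j) (S i j)) :
    HasSum (fun x : ∀ j, α j => (of fun i j => f i j (x j)).det) S.det := by
  let detRows : ContinuousMultilinearMap ℂ (fun _ : ι => ι → ℂ) ℂ :=
    { detRowAlternating.toMultilinearMap with cont := Continuous.matrix_det continuous_id }
  have hcol : ∀ j, HasSum (fun a i => f i j a) (Sᵀ j) := fun j => Pi.hasSum.2 fun i => hf i j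
  have h := hasSum_continuousMultilinearMap_apply detRows hcol fun j => (hcol j).summable.norm
  have hdet : ∀ A : Matrix ι ι ℂ, detRows Aᵀ = A.det := det_transpose
  exact hdet S ▸ h.congr_fun fun x => (hdet _).symm

lemma hasSum_det_fromBlocks {κ : Type*} [Fintype κ] [DecidableEq κ] {f : ι → ∀ j, α j → ℂ}
    {g : κ → ∀ j, α j → ℂ} {S : Matrix ι ι ℂ} {T : Matrix κ ι ℂ}
    (hf : ∀ i j, HasSum (f i j) (S i j)) (hg : ∀ k j, HasSum (g k j) (T k j))
    (B : Matrix ι κ ℂ) (D : Matrix κ κ ℂ) :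
    HasSum (fun x : ∀ j, α j =>
        (fromBlocks (of fun i j => f i j (x j)) B (of fun k j => g k j (x j)) D).det)
      (fromBlocks S B T D).det := by
  -- The columns of `B` and `D` are sums over a one-point index set.
  let β : ι ⊕ κ → Type _ := Sum.elim α fun _ => PUnit
  let (k : κ) : Unique (β (Sum.inr k)) := PUnit.instUnique
  let e : (∀ j, β j) ≃ ∀ j, α j := (Equiv.sumPiEquivProdPi β).trans (Equiv.prodUnique _ _)
  let h (i : ι ⊕ κ) : ∀ j, β j → ℂ :=
    Sum.rec (fun j a => Sum.elim (f · j a) (g · j a) i) fun k _ => Sum.elim (B · k) (D · k) i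
  have hh : ∀ i j, HasSum (h i j) (fromBlocks S B T D i j) := by
    rintro (i | i) (j | k)
    · exact hf i j
    · exact hasSum_unique fun _ : β (Sum.inr k) => B i k
    · exact hg i j
    · exact hasSum_unique fun _ : β (Sum.inr k) => D i k
  refine e.hasSum_iff.1 ((hasSum_det_of_columns hh).congr_fun fun x => congrArg det ?_)
  ext (i | i) (j | k) <;> rfl

end Series

section RelationSums

variable {α β E : Type*} [AddCommMonoid E] [TopologicalSpace E] [ContinuousAdd E]
  [T3Space E] {r : α → β → Prop} {f : {p : α × β // r p.1 p.2} → E}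
  {g : α → E} {h : β → E} {a : E}

lemma hasSum_subtype_prod_of_hasSum_fst (hf : Summable f)
    (hfg : ∀ x, HasSum (fun y : {y // r x y} => f ⟨(x, y), y.2⟩) (g x)) (hg : HasSum g a) :
    HasSum f a := by
  let e := Equiv.subtypeProdEquivSigmaSubtype r
  exact e.symm.hasSum_iff.1 (hg.sigma_of_hasSum hfg (e.symm.summable_iff.2 hf))

lemma hasSum_snd_of_hasSum_subtype_prod (hf : HasSum f a)
    (hfh : ∀ y, HasSum (fun x : {x // r x y} => f ⟨(x, y), x.2⟩) (h y)) : HasSum h a := by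
  let e : (Σ y, {x // r x y}) ≃ {p : α × β // r p.1 p.2} :=
    (Equiv.subtypeProdEquivSigmaSubtype fun y x => r x y).symm.trans
      ((Equiv.prodComm β α).subtypeEquiv fun _ => Iff.rfl)
  exact (e.hasSum_iff.2 hf).sigma hfh

end RelationSums

section Determinants

lemma isBigO_det_of_columns {ι α : Type*} [Fintype ι] [DecidableEq ι] {l : Filter α}
    {A : α → Matrix ι ι ℂ} {g : ι → α → ℝ} (h : ∀ i j, (fun a => A a i j) =O[l] g j) :
    (fun a => (A a).det) =O[l] fun a => ∏ j, g j a := by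
  simp only [det_apply']
  refine IsBigO.fun_sum fun σ _ => IsBigO.const_mul_left ?_ _
  exact IsBigO.finsetProd fun j _ => h (σ j) j

lemma det_sum_rows {n α A : Type*} [Fintype n] [DecidableEq n] [CommRing A]
    (s : n → Finset α) (v : n → α → n → A) :
    (of fun i => ∑ u ∈ s i, v i u).det =
      ∑ u ∈ Fintype.piFinset s, (of fun i => v i (u i)).det :=
  detRowAlternating.toMultilinearMap.map_sum_finset v s

end Determinants

section Gaps

variable {A : Type*} [CommRing A] {N : ℕ}

/-- The consecutive differences `a 0, a 1 - a 0, …, T - a (N - 1)` of the sequence obtained from `a`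
by adding `0` on the left and `T` on the right. If `a` lists the values of a cumulative sum of total
`T`, these are the sums over the `N + 1` intervals in between. -/
def gaps (a : Fin N → A) (T : A) (j : Fin (N + 1)) : A :=
  (Fin.snoc a T : Fin (N + 1) → A) j - (Fin.cons 0 a : Fin (N + 1) → A) j

/-- The bidiagonal matrix with rows `e k - e (k + 1)`. -/
def diffMatrix (A : Type*) [CommRing A] (N : ℕ) : Matrix (Fin N) (Fin (N + 1)) A :=
  of fun k j => (if j = k.castSucc then 1 else 0) - if j = k.succ then 1 else 0

/-- The matrix of indicators `1(k ≥ i)`, a right inverse of `diffMatrix`. -/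
def stepMatrix (A : Type*) [CommRing A] (N : ℕ) : Matrix (Fin (N + 1)) (Fin N) A :=
  of fun i k => if (i : ℕ) ≤ k then 1 else 0

lemma gaps_add (a b : Fin N → A) (S T : A) : gaps (a + b) (S + T) = gaps a S + gaps b T := by
  have hsnoc : (Fin.snoc (a + b) (S + T) : Fin (N + 1) → A) = Fin.snoc a S + Fin.snoc b T := by
    ext j
    cases j using Fin.lastCases <;> simp
  have hcons : (Fin.cons 0 (a + b) : Fin (N + 1) → A) = Fin.cons 0 a + Fin.cons 0 b := by
    ext j
    cases j using Fin.cases <;> simp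
  ext j
  simp only [gaps, hsnoc, hcons, Pi.add_apply]
  ring

lemma diffMatrix_mul_apply {κ : Type*} (B : Matrix (Fin (N + 1)) κ A) (k : Fin N) (l : κ) :
    (diffMatrix A N * B) k l = B k.castSucc l - B k.succ l := by
  simp [diffMatrix, mul_apply, sub_mul]

lemma gaps_zero (a : Fin N → A) : gaps a 0 = a ᵥ* diffMatrix A N := by
  ext j
  simp only [gaps, diffMatrix, vecMul, dotProduct, of_apply, mul_sub, Finset.sum_sub_distrib]
  congr 1
  · cases j using Fin.lastCases <;> simp [(Fin.castSucc_ne_last _).symm]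
  · cases j using Fin.cases <;> simp [(Fin.succ_ne_zero _).symm]

lemma gaps_stepMatrix (i : Fin (N + 1)) : gaps (stepMatrix A N i) 1 = Pi.single i 1 := by
  ext j
  have hsnoc : (Fin.snoc (stepMatrix A N i) 1 : Fin (N + 1) → A) j = if i ≤ j then 1 else 0 := by
    cases j using Fin.lastCases
    · simp only [Fin.snoc_last, Fin.le_last, if_true]
    · simp [stepMatrix, Fin.le_def]
  have hcons : (Fin.cons 0 (stepMatrix A N i) : Fin (N + 1) → A) j = if i < j then 1 else 0 := by
    cases j using Fin.cases <;> simp [stepMatrix, Fin.lt_def]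
  rw [gaps, hsnoc, hcons, Pi.single_apply]
  grind

lemma diffMatrix_mul_stepMatrix : diffMatrix A N * stepMatrix A N = 1 := by
  ext k l
  simp only [diffMatrix_mul_apply, stepMatrix, of_apply, one_apply, Fin.val_castSucc, Fin.val_succ]
  grind

lemma of_gaps_one {F : Matrix (Fin (N + 1)) (Fin N) A} :
    (of fun i => gaps (F i) 1) = 1 + (F - stepMatrix A N) * diffMatrix A N := by
  ext i j
  have h := gaps_add (stepMatrix A N i) (F i - stepMatrix A N i) 1 0
  rw [add_sub_cancel, add_zero, gaps_stepMatrix, gaps_zero] at h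
  rw [of_apply, h, Pi.add_apply]
  simp [mul_apply, vecMul, dotProduct, one_apply, Pi.single_apply, eq_comm]

lemma det_of_gaps_one (F : Matrix (Fin (N + 1)) (Fin N) A) :
    (of fun i => gaps (F i) 1).det = (diffMatrix A N * F).det := by
  rw [of_gaps_one, det_one_add_mul_comm, Matrix.mul_sub, diffMatrix_mul_stepMatrix,
    add_sub_cancel]

lemma det_fromBlocks_one_add_mul {m n : Type*} [Fintype m] [DecidableEq m] [Fintype n]
    [DecidableEq n] (B : Matrix m n A) (D : Matrix n n A) (E : Matrix n m A) :
    (fromBlocks (1 + B * E) B (D * E) D).det = D.det := by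
  have hfactor : fromBlocks (1 + B * E) B (D * E) D =
      fromBlocks 1 B 0 D * fromBlocks 1 0 E 1 := by
    simp [fromBlocks_multiply]
  rw [hfactor, det_mul, det_fromBlocks_zero₂₁, det_fromBlocks_zero₁₂]
  simp

end Gaps

section Interlacing

variable {N : ℕ}

lemma Interlace.strictMono_left {y : Fin N → ℕ} {x : Fin (N + 1) → ℕ} (h : Interlace y x) :
    StrictMono y := by
  cases N with
  | zero => exact Subsingleton.strictMono y
  | succ n => exact Fin.strictMono_iff_lt_succ.2 fun i => (h i.castSucc).2.trans_le (h i.succ).1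

lemma Interlace.strictMono_right {y : Fin N → ℕ} {x : Fin (N + 1) → ℕ} (h : Interlace y x) :
    StrictMono x :=
  Fin.strictMono_iff_lt_succ.2 fun i => (h i).1.trans_lt (h i).2

lemma Interlace.sum_le {y : Fin N → ℕ} {x : Fin (N + 1) → ℕ} (h : Interlace y x) :
    ∑ i, y i ≤ ∑ j, x j := by
  rw [Fin.sum_univ_succ]
  exact le_add_left (Finset.sum_le_sum fun i _ => (h i).2.le)

/-- The values allowed for the `j`-th coordinate of a configuration `x` with `y ≺ x`. -/
def interlaceCell (y : Fin N → ℕ) (j : Fin (N + 1)) : Set ℕ :=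
  {z | (∀ k : Fin N, k.castSucc = j → z ≤ y k) ∧ ∀ k : Fin N, k.succ = j → y k < z}

lemma interlace_iff_mem_cell {y : Fin N → ℕ} {x : Fin (N + 1) → ℕ} :
    Interlace y x ↔ ∀ j, x j ∈ interlaceCell y j :=
  ⟨fun h _ => ⟨fun k hk => hk ▸ (h k).1, fun k hk => hk ▸ (h k).2⟩,
    fun h k => ⟨(h _).1 k rfl, (h _).2 k rfl⟩⟩

/-- Given the lower configuration, the upper coordinates can be chosen independently. -/
def interlaceEquiv (y : Fin N → ℕ) :
    {x : Fin (N + 1) → ℕ // Interlace y x} ≃ ∀ j, interlaceCell y j :=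
  (Equiv.subtypeEquivRight fun _ => interlace_iff_mem_cell).trans
    (Equiv.subtypePiEquivPi (p := fun j z => z ∈ interlaceCell y j))

/-- The finitely many configurations `y` with `y ≺ x`. -/
def interlaceFinset (x : Fin (N + 1) → ℕ) : Finset (Fin N → ℕ) :=
  Fintype.piFinset fun i => Finset.Ico (x i.castSucc) (x i.succ)

lemma mem_interlaceFinset {x : Fin (N + 1) → ℕ} {y : Fin N → ℕ} :
    y ∈ interlaceFinset x ↔ Interlace y x := by
  simp [interlaceFinset, Interlace]

/-- The distribution function `n ↦ f 0 + ⋯ + f n`. -/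
def cumulative (f : ℕ → ℂ) (n : ℕ) : ℂ := ∑ z ∈ Finset.range (n + 1), f z

lemma hasSum_indicator_Iic (f : ℕ → ℂ) (n : ℕ) :
    HasSum ((Set.Iic n).indicator f) (cumulative f n) := by
  have h := hasSum_subtype_iff_indicator.1 ((Finset.range (n + 1)).hasSum f)
  rwa [Finset.coe_range, ← Order.succ_eq_add_one, Order.Iio_succ] at h

lemma hasSum_interlaceCell {y : Fin N → ℕ} (hy : Monotone y) {f : ℕ → ℂ} {T : ℂ}
    (hf : HasSum f T) (j : Fin (N + 1)) :
    HasSum (fun z : interlaceCell y j => f z) (gaps (fun k => cumulative f (y k)) T j) := by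
  let U : Set ℕ := {z | ∀ k : Fin N, k.castSucc = j → z ≤ y k}
  let L : Set ℕ := {z | ∃ k : Fin N, k.succ = j ∧ z ≤ y k}
  have hLU : L ⊆ U := by
    rintro z ⟨k, rfl, hz⟩ l hl
    exact hz.trans (hy (Fin.castSucc_lt_castSucc_iff.1 (hl ▸ k.castSucc_lt_succ)).le)
  have hcell : interlaceCell y j = U \ L := by
    ext z
    simp [interlaceCell, U, L]
  have hU : HasSum (U.indicator f)
      ((Fin.snoc (fun k => cumulative f (y k)) T : Fin (N + 1) → ℂ) j) := by
    cases j using Fin.lastCases with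
    | last => simpa [U, Fin.castSucc_ne_last] using hf
    | cast k => simpa [U, Set.Iic_def] using hasSum_indicator_Iic f (y k)
  have hL : HasSum (L.indicator f)
      ((Fin.cons 0 (fun k => cumulative f (y k)) : Fin (N + 1) → ℂ) j) := by
    cases j using Fin.cases with
    | zero => simp [L, Fin.succ_ne_zero]
    | succ k => simpa [L, Set.Iic_def] using hasSum_indicator_Iic f (y k)
  refine hasSum_subtype_iff_indicator.2 ?_
  rw [hcell, Set.indicator_sdiff hLU]
  exact hU.sub hL

end Interlacing

section HarmonicFunction

variable {lam : ℕ → ℝ} {N : ℕ}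

lemma hfun_succ (lam : ℕ → ℝ) (x : Fin (N + 1) → ℕ) :
    hfun lam (N + 1) x = ∑ y ∈ interlaceFinset x, (∏ i, (lam (y i))⁻¹) * hfun lam N y := by
  let : Fintype {y : Fin N → ℕ // Interlace y x} :=
    Fintype.subtype (interlaceFinset x) fun _ => mem_interlaceFinset
  rw [hfun, tsum_fintype, Finset.sum_subtype _ fun _ => mem_interlaceFinset]

lemma hasSum_hfun_succ (lam : ℕ → ℝ) (x : Fin (N + 1) → ℕ) :
    HasSum (fun y : {y : Fin N → ℕ // Interlace y x} => (∏ i, (lam (y.1 i))⁻¹) * hfun lam N y)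
      (hfun lam (N + 1) x) := by
  let : Fintype {y : Fin N → ℕ // Interlace y x} :=
    Fintype.subtype (interlaceFinset x) fun _ => mem_interlaceFinset
  exact Summable.of_finite.hasSum

lemma hfun_eq_zero {x : Fin N → ℕ} (hx : ¬StrictMono x) : hfun lam N x = 0 := by
  cases N with
  | zero => exact absurd (Subsingleton.strictMono x) hx
  | succ N =>
    have : IsEmpty {y : Fin N → ℕ // Interlace y x} := ⟨fun y => hx y.2.strictMono_right⟩
    rw [hfun, tsum_empty]

lemma card_interlaceFinset_le (x : Fin (N + 1) → ℕ) : #(interlaceFinset x) ≤ 2 ^ ∑ j, x j := by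
  calc #(interlaceFinset x) = ∏ i : Fin N, (x i.succ - x i.castSucc) := by
        simp [interlaceFinset, Fintype.card_piFinset]
    _ ≤ ∏ i : Fin N, 2 ^ x i.succ :=
        Finset.prod_le_prod' fun i _ => (Nat.sub_le _ _).trans Nat.lt_two_pow_self.le
    _ ≤ 2 ^ ∑ j, x j := by
        rw [Finset.prod_pow_eq_pow_sum, Fin.sum_univ_succ]
        exact Nat.pow_le_pow_right two_pos (Nat.le_add_left _ _)

lemma isBigO_prod_inv {s : ℝ} (hs : 0 < s) (hlb : ∀ k, s ≤ lam k) :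
    (fun y : Fin N → ℕ => ∏ i, (lam (y i))⁻¹) =O[⊤] fun _ => (1 : ℝ) := by
  refine isBigO_of_le' (c := s⁻¹ ^ N) _ fun y => ?_
  rw [norm_prod, norm_one, mul_one]
  refine (Finset.prod_le_prod (g := fun _ => s⁻¹) (fun _ _ => norm_nonneg _)
    fun i _ => ?_).trans_eq (by simp)
  rw [norm_inv, Real.norm_of_nonneg (hs.trans_le (hlb _)).le]
  exact inv_anti₀ hs (hlb _)

lemma hfun_isBigO {s : ℝ} (hs : 0 < s) (hlb : ∀ k, s ≤ lam k) (N : ℕ) :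
    hfun lam N =O[⊤] fun x => (2 : ℝ) ^ (N * ∑ i, x i) := by
  induction N with
  | zero => simpa [hfun] using isBigO_refl (fun _ : Fin 0 → ℕ => (1 : ℝ)) ⊤
  | succ N ih =>
    obtain ⟨C, hC⟩ := isBigO_top.1 ((isBigO_prod_inv hs hlb).mul ih)
    have hterm : ∀ x, ∀ y ∈ interlaceFinset x,
        ‖(∏ i, (lam (y i))⁻¹) * hfun lam N y‖ ≤ |C| * 2 ^ (N * ∑ j, x j) := fun x y hy => by
      have hyx := (mem_interlaceFinset.1 hy).sum_le
      calc _ ≤ C * 2 ^ (N * ∑ i, y i) := by simpa using hC y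
        _ ≤ |C| * 2 ^ (N * ∑ j, x j) := by
          gcongr
          · exact le_abs_self C
          · exact one_le_two
    refine isBigO_top.2 ⟨|C|, fun x => ?_⟩
    rw [hfun_succ, norm_pow, Real.norm_two]
    calc _ ≤ #(interlaceFinset x) • (|C| * 2 ^ (N * ∑ j, x j)) :=
          (norm_sum_le _ _).trans (Finset.sum_le_card_nsmul _ _ _ (hterm x))
      _ ≤ 2 ^ (∑ j, x j) * (|C| * 2 ^ (N * ∑ j, x j)) := by
          rw [nsmul_eq_mul]
          gcongr
          exact_mod_cast card_interlaceFinset_le x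
      _ = |C| * 2 ^ ((N + 1) * ∑ j, x j) := by ring

lemma summable_pow_sum (n : ℕ) : Summable fun x : Fin n → ℕ => (1 / 2 : ℝ) ^ ∑ i, x i := by
  simp only [← Finset.prod_pow_eq_pow_sum]
  exact summable_pi_prod_of_nonneg (fun _ _ => by positivity) fun _ => summable_geometric_two

lemma summable_mul_hfun {s : ℝ} (hs : 0 < s) (hlb : ∀ k, s ≤ lam k)
    {F : {p : (Fin N → ℕ) × (Fin (N + 1) → ℕ) // Interlace p.1 p.2} → ℂ}
    (hF : ∀ ρ : ℝ, 0 < ρ → F =O[⊤] fun p => ρ ^ ∑ j, p.1.2 j) :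
    Summable fun p => F p * hfun lam N p.1.1 := by
  have hgeom : Summable fun p : {p : (Fin N → ℕ) × (Fin (N + 1) → ℕ) // Interlace p.1 p.2} =>
      (1 / 2 : ℝ) ^ (∑ i, p.1.1 i) * (1 / 2 : ℝ) ^ (∑ j, p.1.2 j) :=
    ((summable_pow_sum N).mul_of_nonneg (summable_pow_sum (N + 1)) (fun _ => by positivity)
      fun _ => by positivity).comp_injective Subtype.val_injective
  have hh : (fun p : {p : (Fin N → ℕ) × (Fin (N + 1) → ℕ) // Interlace p.1 p.2} =>
      (hfun lam N p.1.1 : ℂ)) =O[⊤] fun p => (2 : ℝ) ^ (N * ∑ i, p.1.1 i) :=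
    (isBigO_ofReal_left.2 (hfun_isBigO hs hlb N)).comp_tendsto tendsto_top
  refine summable_of_isBigO hgeom (((hF ((1 / 2) ^ (N + 2)) (by positivity)).mul hh).trans
    (isBigO_of_le _ fun p => ?_) |>.mono le_top)
  have hp := p.2.sum_le
  rw [Real.norm_of_nonneg (by positivity), Real.norm_of_nonneg (by positivity)]
  calc ((1 / 2 : ℝ) ^ (N + 2)) ^ (∑ j, p.1.2 j) * 2 ^ (N * ∑ i, p.1.1 i)
      ≤ ((1 / 2 : ℝ) ^ (N + 2)) ^ (∑ j, p.1.2 j) * 2 ^ (N * ∑ j, p.1.2 j) := by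
        gcongr
        exact one_le_two
    _ = (1 / 2 : ℝ) ^ (∑ j, p.1.2 j) * (1 / 2 : ℝ) ^ (∑ j, p.1.2 j) := by
        rw [pow_mul 2, ← mul_pow, ← mul_pow, pow_add, mul_right_comm, ← mul_pow]
        norm_num
    _ ≤ (1 / 2 : ℝ) ^ (∑ i, p.1.1 i) * (1 / 2 : ℝ) ^ (∑ j, p.1.2 j) := by
        gcongr ?_ * _
        exact pow_le_pow_of_le_one (by norm_num) (by norm_num) hp

end HarmonicFunction

section Kernels

/-- A kernel on `ℕ` with the properties of the semigroup `e^{tL}` of the pure-birth chain with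
rates `lam` from which harmonicity follows: superexponential decay, total mass one, and
`intertwining`, which exchanges a difference in the starting point of the distribution functions for
one in the end point. Nonnegativity is not part of the definition. -/
structure IsRateKernel (lam : ℕ → ℝ) (P : ℕ → ℕ → ℂ) : Prop where
  isBigO_pow (x : ℕ) {ρ : ℝ} (hρ : 0 < ρ) : P x =O[⊤] fun z => ρ ^ z
  hasSum_one (x : ℕ) : HasSum (P x) 1
  intertwining (x z : ℕ) :
    (lam x : ℂ) * (cumulative (P x) z - cumulative (P (x + 1)) z) = lam z * P x z

/-- The Karlin–McGregor determinant of a one-particle kernel, describing non-intersecting particles.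
Starting and end points are not assumed to be ordered. -/
noncomputable def karlinMcGregor {n : ℕ} (P : ℕ → ℕ → ℂ) (x x' : Fin n → ℕ) : ℂ :=
  (of fun i j => P (x i) (x' j)).det

/-- The two-level block determinant kernel built from an arbitrary one-particle kernel `P`;
`Ut lam R t N` unfolds to the case `P = eL lam R t`. -/
noncomputable def twoLevelKernel {N : ℕ} (lam : ℕ → ℝ) (P : ℕ → ℕ → ℂ)
    (y : Fin N → ℕ) (x : Fin (N + 1) → ℕ) (y' : Fin N → ℕ) (x' : Fin (N + 1) → ℕ) : ℂ :=
  (fromBlocks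
    (of fun i j => P (x i) (x' j))
    (of fun i j => (1 / (lam (y' j) : ℂ)) * (cumulative (P (x i)) (y' j) - stepMatrix ℂ N i j))
    (of fun i j => (lam (y i) : ℂ) * (P (y i) (x' j) - P (y i + 1) (x' j)))
    (of fun i j => P (y i) (y' j))).det

variable {lam : ℕ → ℝ} {P : ℕ → ℕ → ℂ} {N : ℕ}

lemma IsRateKernel.cumulative_sub_cumulative (hP : IsRateKernel lam P) (hlam : ∀ k, lam k ≠ 0)
    {a b : ℕ} (hab : a ≤ b) (z : ℕ) :
    cumulative (P a) z - cumulative (P b) z =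
      ∑ u ∈ Finset.Ico a b, lam z * ((lam u : ℂ)⁻¹ * P u z) := by
  have hstep (u : ℕ) : cumulative (P u) z - cumulative (P (u + 1)) z =
      lam z * ((lam u : ℂ)⁻¹ * P u z) := by
    have hu : (lam u : ℂ) ≠ 0 := mod_cast hlam u
    rw [mul_left_comm, ← hP.intertwining, inv_mul_cancel_left₀ hu]
  have htelescope := Finset.sum_Ico_sub (fun u => -cumulative (P u) z) hab
  simpa only [neg_sub_neg, hstep] using htelescope.symm

lemma IsRateKernel.det_diffMatrix_mul_cumulative (hP : IsRateKernel lam P) (hlam : ∀ k, lam k ≠ 0)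
    {x : Fin (N + 1) → ℕ} (hx : Monotone x) (y : Fin N → ℕ) :
    (diffMatrix ℂ N * of fun i k => cumulative (P (x i)) (y k)).det =
      (∏ k, (lam (y k) : ℂ)) *
        ∑ u ∈ interlaceFinset x, (∏ i, (lam (u i) : ℂ)⁻¹) * karlinMcGregor P u y := by
  have hrows : diffMatrix ℂ N * (of fun i k => cumulative (P (x i)) (y k)) =
      of fun i => ∑ u ∈ Finset.Ico (x i.castSucc) (x i.succ),
        fun k => lam (y k) * ((lam u : ℂ)⁻¹ * P u (y k)) := by
    ext i k
    rw [diffMatrix_mul_apply]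
    simp only [of_apply, Finset.sum_apply]
    exact hP.cumulative_sub_cumulative hlam (hx i.castSucc_lt_succ.le) _
  rw [hrows, det_sum_rows, Finset.mul_sum]
  refine Finset.sum_congr rfl fun u _ => ?_
  exact (det_mul_row _ _).trans (congrArg _ (det_mul_column _ _))

lemma IsRateKernel.hasSum_karlinMcGregor_mul_prod_inv (hP : IsRateKernel lam P)
    (hlam : ∀ k, lam k ≠ 0) {x : Fin (N + 1) → ℕ} (hx : Monotone x) {y : Fin N → ℕ}
    (hy : Monotone y) :
    HasSum (fun x' : {x' : Fin (N + 1) → ℕ // Interlace y x'} =>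
      karlinMcGregor P x x' * ∏ i, (lam (y i) : ℂ)⁻¹)
      (∑ u ∈ interlaceFinset x, (∏ i, (lam (u i) : ℂ)⁻¹) * karlinMcGregor P u y) := by
  have hcells := hasSum_det_of_columns (f := fun i j (z : interlaceCell y j) => P (x i) z)
    fun i j => hasSum_interlaceCell hy (hP.hasSum_one (x i)) j
  have hsum : HasSum (fun x' : {x' : Fin (N + 1) → ℕ // Interlace y x'} => karlinMcGregor P x x')
      ((∏ k, (lam (y k) : ℂ)) *
        ∑ u ∈ interlaceFinset x, (∏ i, (lam (u i) : ℂ)⁻¹) * karlinMcGregor P u y) := by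
    rw [← hP.det_diffMatrix_mul_cumulative hlam hx, ← det_of_gaps_one]
    exact ((interlaceEquiv y).hasSum_iff.2 hcells).congr_fun fun _ => congrArg det rfl
  have hprod : ∏ i, (lam (y i) : ℂ) ≠ 0 := Finset.prod_ne_zero_iff.2 fun i _ => mod_cast hlam _
  simpa only [Finset.prod_inv_distrib, mul_right_comm _ _ (∏ i, (lam (y i) : ℂ))⁻¹,
    mul_inv_cancel₀ hprod, one_mul] using hsum.mul_right (∏ i, (lam (y i) : ℂ)⁻¹)

lemma IsRateKernel.cumulative_forwardDiff (hP : IsRateKernel lam P) (x z : ℕ) :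
    cumulative (fun z => lam x * (P x z - P (x + 1) z)) z = lam z * P x z := by
  rw [← hP.intertwining]
  simp only [cumulative, ← Finset.mul_sum, Finset.sum_sub_distrib]

lemma IsRateKernel.hasSum_forwardDiff (hP : IsRateKernel lam P) (x : ℕ) :
    HasSum (fun z => lam x * (P x z - P (x + 1) z)) 0 := by
  simpa using ((hP.hasSum_one x).sub (hP.hasSum_one (x + 1))).mul_left (lam x : ℂ)

lemma IsRateKernel.hasSum_twoLevelKernel (hP : IsRateKernel lam P) (hlam : ∀ k, lam k ≠ 0)
    (y : Fin N → ℕ) (x : Fin (N + 1) → ℕ) {y' : Fin N → ℕ} (hy' : Monotone y') :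
    HasSum (fun x' : {x' : Fin (N + 1) → ℕ // Interlace y' x'} => twoLevelKernel lam P y x y' x')
      (karlinMcGregor P y y') := by
  let D : Matrix (Fin N) (Fin N) ℂ := of fun i k => P (y i) (y' k)
  let F : Matrix (Fin (N + 1)) (Fin N) ℂ := of fun i k => cumulative (P (x i)) (y' k)
  let B : Matrix (Fin (N + 1)) (Fin N) ℂ := of fun i k =>
    (1 / (lam (y' k) : ℂ)) * (F i k - stepMatrix ℂ N i k)
  let Λ : Matrix (Fin N) (Fin N) ℂ := diagonal fun k => (lam (y' k) : ℂ)
  have hB : B * Λ = F - stepMatrix ℂ N := by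
    ext i k
    have hk : (lam (y' k) : ℂ) ≠ 0 := mod_cast hlam (y' k)
    simp only [Λ, B, mul_diagonal, of_apply, Matrix.sub_apply]
    field_simp
  have hupper (i j) : HasSum (fun z : interlaceCell y' j => P (x i) z)
      ((1 + B * (Λ * diffMatrix ℂ N) : Matrix _ _ ℂ) i j) := by
    rw [← Matrix.mul_assoc, hB, ← of_gaps_one]
    exact hasSum_interlaceCell hy' (hP.hasSum_one (x i)) j
  have hlower (i j) : HasSum (fun z : interlaceCell y' j =>
      (lam (y i) : ℂ) * (P (y i) z - P (y i + 1) z)) ((D * (Λ * diffMatrix ℂ N)) i j) := by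
    have hrow : (D * Λ) i = fun k => (lam (y' k) : ℂ) * P (y i) (y' k) := by
      ext k
      simp only [D, Λ, mul_diagonal, of_apply, mul_comm]
    rw [← Matrix.mul_assoc, mul_apply_eq_vecMul, hrow, ← gaps_zero]
    simpa only [hP.cumulative_forwardDiff] using
      hasSum_interlaceCell hy' (hP.hasSum_forwardDiff (y i)) j
  have hcells := hasSum_det_fromBlocks hupper hlower B D
  rw [det_fromBlocks_one_add_mul] at hcells
  exact ((interlaceEquiv y').hasSum_iff.2 hcells).congr_fun fun _ => congrArg det rfl

lemma IsRateKernel.isBigO_one (hP : IsRateKernel lam P) (x : ℕ) : P x =O[⊤] fun _ => (1 : ℝ) := by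
  simpa using hP.isBigO_pow x one_pos

lemma IsRateKernel.cumulative_isBigO_one (hP : IsRateKernel lam P) (x : ℕ) :
    cumulative (P x) =O[⊤] fun _ => (1 : ℝ) := by
  refine isBigO_of_le' (c := ∑' z, ‖P x z‖) _ fun n => ?_
  rw [norm_one, mul_one]
  exact (norm_sum_le _ _).trans
    ((hP.hasSum_one x).summable.norm.sum_le_tsum _ fun _ _ => norm_nonneg _)

lemma IsRateKernel.karlinMcGregor_isBigO (hP : IsRateKernel lam P) (x : Fin N → ℕ) {ρ : ℝ}
    (hρ : 0 < ρ) : karlinMcGregor P x =O[⊤] fun x' => ρ ^ ∑ j, x' j := by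
  simp only [← Finset.prod_pow_eq_pow_sum]
  exact isBigO_det_of_columns fun i j => (hP.isBigO_pow (x i) hρ).comp_tendsto tendsto_top

lemma IsRateKernel.twoLevelKernel_isBigO (hP : IsRateKernel lam P) {s : ℝ} (hs : 0 < s)
    (hlb : ∀ k, s ≤ lam k) (y : Fin N → ℕ) (x : Fin (N + 1) → ℕ) {ρ : ℝ} (hρ : 0 < ρ) :
    (fun p : (Fin N → ℕ) × (Fin (N + 1) → ℕ) => twoLevelKernel lam P y x p.1 p.2) =O[⊤]
      fun p => ρ ^ ∑ j, p.2 j := by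
  have hlam : (fun z => 1 / (lam z : ℂ)) =O[⊤] fun _ => (1 : ℝ) := by
    refine isBigO_of_le' (c := s⁻¹) _ fun z => ?_
    rw [norm_div, norm_one, Complex.norm_of_nonneg (hs.le.trans (hlb z)), norm_one, mul_one,
      one_div]
    exact inv_anti₀ hs (hlb z)
  have hB (i j) : (fun z => (1 / (lam z : ℂ)) * (cumulative (P (x i)) z - stepMatrix ℂ N i j))
      =O[⊤] fun _ => (1 : ℝ) := by
    simpa only [mul_one] using
      hlam.mul ((hP.cumulative_isBigO_one (x i)).sub (isBigO_const_const _ one_ne_zero _))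
  have hC (i) : (fun z => (lam (y i) : ℂ) * (P (y i) z - P (y i + 1) z)) =O[⊤] fun z => ρ ^ z :=
    ((hP.isBigO_pow _ hρ).sub (hP.isBigO_pow _ hρ)).const_mul_left _
  let g : Fin (N + 1) ⊕ Fin N → (Fin N → ℕ) × (Fin (N + 1) → ℕ) → ℝ :=
    Sum.elim (fun j p => ρ ^ p.2 j) fun _ _ => 1
  have hg : (fun p : (Fin N → ℕ) × (Fin (N + 1) → ℕ) => ρ ^ ∑ j, p.2 j) =
      fun p => ∏ j, g j p := by
    simp [g, Finset.prod_pow_eq_pow_sum]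
  rw [hg]
  refine isBigO_det_of_columns ?_
  rintro (i | i) (j | j)
  · exact (hP.isBigO_pow (x i) hρ).comp_tendsto tendsto_top
  · exact (hB i j).comp_tendsto tendsto_top
  · exact (hC i).comp_tendsto tendsto_top
  · exact (hP.isBigO_one (y i)).comp_tendsto tendsto_top

theorem IsRateKernel.hasSum_karlinMcGregor_mul_hfun (hP : IsRateKernel lam P) {s : ℝ} (hs : 0 < s)
    (hlb : ∀ k, s ≤ lam k) {x : Fin N → ℕ} (hx : StrictMono x) :
    HasSum (fun x' => karlinMcGregor P x x' * hfun lam N x') (hfun lam N x) := by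
  induction N with
  | zero => simp [karlinMcGregor, hfun]
  | succ N ih =>
    have hlam (k : ℕ) : lam k ≠ 0 := (hs.trans_le (hlb k)).ne'
    let f (p : {p : (Fin N → ℕ) × (Fin (N + 1) → ℕ) // Interlace p.1 p.2}) : ℂ :=
      karlinMcGregor P x p.1.2 * (∏ i, (lam (p.1.1 i) : ℂ)⁻¹) * hfun lam N p.1.1
    let g (y : Fin N → ℕ) : ℂ :=
      ∑ u ∈ interlaceFinset x, (∏ i, (lam (u i) : ℂ)⁻¹) * (karlinMcGregor P u y * hfun lam N y)
    have hf : Summable f := summable_mul_hfun hs hlb fun ρ hρ => by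
      have hprod : (fun y : Fin N → ℕ => ∏ i, (lam (y i) : ℂ)⁻¹) =O[⊤] fun _ => (1 : ℝ) := by
        simpa only [ofReal_prod, ofReal_inv] using isBigO_ofReal_left.2 (isBigO_prod_inv hs hlb)
      simpa only [Function.comp_def, mul_one] using
        ((hP.karlinMcGregor_isBigO x hρ).comp_tendsto tendsto_top).mul
          (hprod.comp_tendsto tendsto_top)
    have hfg (y) : HasSum (fun x' : {x' // Interlace y x'} => f ⟨(y, x'), x'.2⟩) (g y) := by
      by_cases hy : StrictMono y
      · simpa only [f, g, Finset.sum_mul, mul_assoc] using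
          (hP.hasSum_karlinMcGregor_mul_prod_inv hlam hx.monotone hy.monotone).mul_right
            (hfun lam N y : ℂ)
      · simp only [f, g, hfun_eq_zero hy, ofReal_zero, mul_zero, Finset.sum_const_zero]
        exact hasSum_zero
    have hg : HasSum g (hfun lam (N + 1) x) := by
      rw [hfun_succ]
      push_cast
      exact hasSum_sum fun u hu => (ih (mem_interlaceFinset.1 hu).strictMono_left).mul_left _
    refine hasSum_snd_of_hasSum_subtype_prod (hasSum_subtype_prod_of_hasSum_fst hf hfg hg)
      fun x' => ?_
    have h := (hasSum_ofReal.2 (hasSum_hfun_succ lam x')).mul_left (karlinMcGregor P x x')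
    push_cast at h
    simpa only [f, mul_assoc] using h

theorem IsRateKernel.hasSum_twoLevelKernel_mul_hfun (hP : IsRateKernel lam P) {s : ℝ}
    (hs : 0 < s) (hlb : ∀ k, s ≤ lam k) {y : Fin N → ℕ} (hy : StrictMono y)
    (x : Fin (N + 1) → ℕ) :
    HasSum (fun p : {p : (Fin N → ℕ) × (Fin (N + 1) → ℕ) // Interlace p.1 p.2} =>
      twoLevelKernel lam P y x p.1.1 p.1.2 * hfun lam N p.1.1) (hfun lam N y) := by
  have hlam (k : ℕ) : lam k ≠ 0 := (hs.trans_le (hlb k)).ne'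
  refine hasSum_subtype_prod_of_hasSum_fst (summable_mul_hfun hs hlb fun ρ hρ =>
    (hP.twoLevelKernel_isBigO hs hlb y x hρ).comp_tendsto tendsto_top) (fun y' => ?_)
    (hP.hasSum_karlinMcGregor_mul_hfun hs hlb hy)
  by_cases hy' : StrictMono y'
  · exact (hP.hasSum_twoLevelKernel hlam y x hy'.monotone).mul_right _
  · simp only [hfun_eq_zero hy', ofReal_zero, mul_zero]
    exact hasSum_zero

end Kernels

section Contour

variable {lam : ℕ → ℝ} {M R : ℝ}

/-- The integrand of `tailIntegral`; on the contour it is `p_x(w) e^{-tw} / (p_n(w) w)`. -/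
noncomputable def tailIntegrand (lam : ℕ → ℝ) (t : ℝ) (x n : ℕ) (w : ℂ) : ℂ :=
  (pF lam n w)⁻¹ * (pF lam x w * exp (-(t : ℂ) * w) / w)

/-- The contour integral representing the tail `∑_{z ≥ n} e^{tL}(x, z)`. -/
noncomputable def tailIntegral (lam : ℕ → ℝ) (R t : ℝ) (x n : ℕ) : ℂ :=
  (2 * (π : ℂ) * I)⁻¹ * ∮ w in C(0, R), tailIntegrand lam t x n w

lemma psiF_eq_inv_pF (lam : ℕ → ℝ) (x : ℕ) (w : ℂ) : psiF lam x w = (pF lam (x + 1) w)⁻¹ := by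
  simp only [psiF, pF, ← Finset.prod_inv_distrib, inv_div]

lemma pF_succ (lam : ℕ → ℝ) (x : ℕ) (w : ℂ) :
    pF lam (x + 1) w = pF lam x w * ((lam x - w) / lam x) :=
  Finset.prod_range_succ _ _

lemma pF_zero_right (hlam : ∀ k, lam k ≠ 0) (x : ℕ) : pF lam x 0 = 1 :=
  Finset.prod_eq_one fun k _ => by rw [sub_zero, div_self (mod_cast hlam k)]

lemma differentiable_pF (lam : ℕ → ℝ) (x : ℕ) : Differentiable ℂ (pF lam x) := by
  unfold pF
  fun_prop

lemma pF_ne_zero (h0 : ∀ k, 0 < lam k) (hub : ∀ k, lam k ≤ M) {w : ℂ} (hw : M < ‖w‖) (x : ℕ) :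
    pF lam x w ≠ 0 := by
  refine Finset.prod_ne_zero_iff.2 fun k _ => div_ne_zero (sub_ne_zero.2 ?_) (mod_cast (h0 k).ne')
  rintro rfl
  rw [Complex.norm_of_nonneg (h0 k).le] at hw
  exact hw.not_ge (hub k)

lemma ne_zero_of_lt_norm (h0 : ∀ k, 0 < lam k) (hub : ∀ k, lam k ≤ M) {w : ℂ} (hw : M < ‖w‖) :
    w ≠ 0 :=
  norm_pos_iff.1 (((h0 0).trans_le (hub 0)).trans hw)

lemma norm_inv_pF_le (h0 : ∀ k, 0 < lam k) (hub : ∀ k, lam k ≤ M) {ρ : ℝ} (hρ : 0 < ρ) {w : ℂ}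
    (hw : M + M / ρ ≤ ‖w‖) (n : ℕ) : ‖(pF lam n w)⁻¹‖ ≤ ρ ^ n := by
  have hM : 0 < M := (h0 0).trans_le (hub 0)
  have hfactor (k : ℕ) : ‖(lam k : ℂ) / (lam k - w)‖ ≤ ρ := by
    have hsub : M / ρ ≤ ‖(lam k : ℂ) - w‖ := by
      have h := norm_sub_norm_le w (lam k)
      rw [Complex.norm_of_nonneg (h0 k).le, norm_sub_rev] at h
      linarith [hub k]
    rw [norm_div, Complex.norm_of_nonneg (h0 k).le, div_le_iff₀ ((div_pos hM hρ).trans_le hsub)]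
    exact (hub k).trans ((div_le_iff₀' hρ).1 hsub)
  simp only [pF, ← Finset.prod_inv_distrib, inv_div]
  exact (Finset.norm_prod_le _ _).trans ((Finset.prod_le_prod (fun _ _ => norm_nonneg _)
    fun k _ => hfactor k).trans_eq (by simp))

lemma tailIntegrand_eq_inv_pF_mul (lam : ℕ → ℝ) (t : ℝ) (x n : ℕ) (w : ℂ) :
    tailIntegrand lam t x n w = (pF lam n w)⁻¹ * tailIntegrand lam t x 0 w := by
  simp only [tailIntegrand, pF, Finset.prod_range_zero, inv_one, one_mul]

lemma differentiableAt_tailIntegrand (h0 : ∀ k, 0 < lam k) (hub : ∀ k, lam k ≤ M) (t : ℝ)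
    (x n : ℕ) {w : ℂ} (hw : M < ‖w‖) :
    DifferentiableAt ℂ (tailIntegrand lam t x n) w := by
  have hexp : DifferentiableAt ℂ (fun w => exp (-(t : ℂ) * w)) w := by fun_prop
  exact ((differentiable_pF lam n w).inv (pF_ne_zero h0 hub hw n)).mul
    (((differentiable_pF lam x w).mul hexp).div differentiableAt_id
      (ne_zero_of_lt_norm h0 hub hw))

lemma continuousOn_tailIntegrand (h0 : ∀ k, 0 < lam k) (hub : ∀ k, lam k ≤ M) (hR : M < R)
    (t : ℝ) (x n : ℕ) : ContinuousOn (tailIntegrand lam t x n) (Metric.sphere 0 R) := by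
  intro w hw
  rw [mem_sphere_zero_iff_norm] at hw
  exact (differentiableAt_tailIntegrand h0 hub t x n
    (hw ▸ hR)).continuousAt.continuousWithinAt

lemma tailIntegral_eq_of_le (h0 : ∀ k, 0 < lam k) (hub : ∀ k, lam k ≤ M) (hR : M < R) {R' : ℝ}
    (hRR' : R ≤ R') (t : ℝ) (x n : ℕ) :
    tailIntegral lam R t x n = tailIntegral lam R' t x n := by
  have hR0 : 0 < R := ((h0 0).trans_le (hub 0)).trans hR
  have hdiff {w : ℂ} (hw : R ≤ ‖w‖) := differentiableAt_tailIntegrand h0 hub t x n (hR.trans_le hw)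
  refine congrArg _ (circleIntegral_eq_of_differentiable_on_annulus_off_countable hR0 hRR'
    Set.countable_empty (fun w hw => (hdiff ?_).continuousAt.continuousWithinAt)
    fun w hw => hdiff ?_).symm
  · simpa using hw.2
  · exact (not_le.1 fun h => hw.1.2 (mem_closedBall_zero_iff.2 h)).le

lemma tailIntegral_isBigO_pow (h0 : ∀ k, 0 < lam k) (hub : ∀ k, lam k ≤ M) (hR : M < R) (t : ℝ)
    (x : ℕ) {ρ : ℝ} (hρ : 0 < ρ) : tailIntegral lam R t x =O[⊤] fun n => ρ ^ n := by
  have hM : 0 < M := (h0 0).trans_le (hub 0)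
  let R' := R + (M + M / ρ)
  have hRR' : R ≤ R' := by
    have : 0 < M / ρ := div_pos hM hρ
    linarith
  have hR' : 0 ≤ R' := (hM.trans hR).le.trans hRR'
  obtain ⟨G, hG⟩ := (isCompact_sphere (0 : ℂ) R').exists_bound_of_continuousOn
    (continuousOn_tailIntegrand h0 hub (hR.trans_le hRR') t x 0)
  refine isBigO_of_le' (c := R' * G) _ fun n => ?_
  rw [tailIntegral_eq_of_le h0 hub hR hRR', tailIntegral, ← smul_eq_mul]
  refine (circleIntegral.norm_two_pi_i_inv_smul_integral_le_of_norm_le_const hR'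
    (C := ρ ^ n * G) fun w hw => ?_).trans_eq ?_
  · rw [tailIntegrand_eq_inv_pF_mul, norm_mul]
    have hw' : M + M / ρ ≤ ‖w‖ := by
      rw [mem_sphere_zero_iff_norm.1 hw]
      linarith [hM.trans hR]
    exact mul_le_mul (norm_inv_pF_le h0 hub hρ hw' n) (hG w hw) (norm_nonneg _) (by positivity)
  · rw [Real.norm_of_nonneg (by positivity)]
    ring

lemma tailIntegral_zero (hlam : ∀ k, lam k ≠ 0) (hR : 0 < R) (t : ℝ) (x : ℕ) :
    tailIntegral lam R t x 0 = 1 := by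
  have hdiff : Differentiable ℂ fun w => pF lam x w * exp (-(t : ℂ) * w) :=
    (differentiable_pF lam x).mul (by fun_prop)
  have hcauchy := DiffContOnCl.two_pi_i_inv_smul_circleIntegral_sub_inv_smul
    (hdiff.diffContOnCl (s := Metric.ball 0 R)) (Metric.mem_ball_self hR)
  have hpF (w : ℂ) : pF lam 0 w = 1 := Finset.prod_range_zero _
  simpa only [tailIntegral, tailIntegrand, hpF, inv_one, one_mul, div_eq_inv_mul, sub_zero,
    smul_eq_mul, mul_zero, exp_zero, pF_zero_right hlam, mul_one] using hcauchy

lemma tailIntegral_sub_tailIntegral (h0 : ∀ k, 0 < lam k) (hub : ∀ k, lam k ≤ M) (hR : M < R)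
    {t : ℝ} {x n x' n' : ℕ} {c : ℂ} {f : ℂ → ℂ}
    (hf : ∀ w, M < ‖w‖ → tailIntegrand lam t x n w - tailIntegrand lam t x' n' w = c * f w) :
    tailIntegral lam R t x n - tailIntegral lam R t x' n' =
      c * ((2 * (π : ℂ) * I)⁻¹ * ∮ w in C(0, R), f w) := by
  have hR0 : 0 ≤ R := (((h0 0).trans_le (hub 0)).trans hR).le
  have hintegrable (x n : ℕ) : CircleIntegrable (tailIntegrand lam t x n) 0 R :=
    (continuousOn_tailIntegrand h0 hub hR t x n).circleIntegrable hR0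
  rw [tailIntegral, tailIntegral, ← mul_sub,
    ← circleIntegral.integral_sub (hintegrable x n) (hintegrable x' n'), mul_left_comm,
    ← circleIntegral.integral_const_mul c]
  refine congrArg _ (circleIntegral.integral_congr hR0 fun w hw => hf w ?_)
  rwa [mem_sphere_zero_iff_norm.1 hw]

lemma eL_eq_tailIntegral_sub (h0 : ∀ k, 0 < lam k) (hub : ∀ k, lam k ≤ M) (hR : M < R) (t : ℝ)
    (x z : ℕ) :
    eL lam R t x z = tailIntegral lam R t x z - tailIntegral lam R t x (z + 1) := by
  refine (tailIntegral_sub_tailIntegral h0 hub hR fun w hw => ?_).symm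
  have hw0 := ne_zero_of_lt_norm h0 hub hw
  have hz : (lam z : ℂ) ≠ 0 := mod_cast (h0 z).ne'
  have hpF := pF_ne_zero h0 hub hw z
  have hfactor : (lam z : ℂ) - w ≠ 0 := by
    have := pF_ne_zero h0 hub hw (z + 1)
    rw [pF_succ] at this
    exact (div_ne_zero_iff.1 (right_ne_zero_of_mul this)).1
  rw [tailIntegrand, tailIntegrand, psiF_eq_inv_pF, pF_succ]
  field_simp
  ring

lemma mul_tailIntegral_succ_sub (h0 : ∀ k, 0 < lam k) (hub : ∀ k, lam k ≤ M) (hR : M < R) (t : ℝ)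
    (x z : ℕ) :
    lam x * (tailIntegral lam R t (x + 1) (z + 1) - tailIntegral lam R t x (z + 1)) =
      lam z * eL lam R t x z := by
  have hx : (lam x : ℂ) ≠ 0 := mod_cast (h0 x).ne'
  have hz : (lam z : ℂ) ≠ 0 := mod_cast (h0 z).ne'
  rw [tailIntegral_sub_tailIntegral h0 hub hR (c := -(1 / lam x))
    (f := fun w => psiF lam z w * pF lam x w * exp (-(t : ℂ) * w)) fun w hw => ?_, eL]
  · field_simp
  · have hw0 := ne_zero_of_lt_norm h0 hub hw
    rw [tailIntegrand, tailIntegrand, psiF_eq_inv_pF, pF_succ lam x]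
    field_simp
    ring

lemma cumulative_eL (h0 : ∀ k, 0 < lam k) (hub : ∀ k, lam k ≤ M) (hR : M < R) (t : ℝ)
    (x z : ℕ) : cumulative (eL lam R t x) z = 1 - tailIntegral lam R t x (z + 1) := by
  simp only [cumulative, eL_eq_tailIntegral_sub h0 hub hR]
  rw [Finset.sum_range_sub', tailIntegral_zero (fun k => (h0 k).ne')
    (((h0 0).trans_le (hub 0)).trans hR)]

lemma eL_isBigO_pow (h0 : ∀ k, 0 < lam k) (hub : ∀ k, lam k ≤ M) (hR : M < R) (t : ℝ) (x : ℕ)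
    {ρ : ℝ} (hρ : 0 < ρ) : eL lam R t x =O[⊤] fun z => ρ ^ z := by
  have htail := tailIntegral_isBigO_pow h0 hub hR t x hρ
  have hshift : (fun z => tailIntegral lam R t x (z + 1)) =O[⊤] fun z => ρ ^ z := by
    refine (htail.comp_tendsto tendsto_top).trans ?_
    simp only [Function.comp_def, pow_succ]
    simpa only [mul_comm] using isBigO_const_mul_self ρ (fun n => ρ ^ n) ⊤
  exact (htail.sub hshift).congr_left fun z => (eL_eq_tailIntegral_sub h0 hub hR t x z).symm

lemma hasSum_eL (h0 : ∀ k, 0 < lam k) (hub : ∀ k, lam k ≤ M) (hR : M < R) (t : ℝ) (x : ℕ) :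
    HasSum (eL lam R t x) 1 := by
  have hsummable : Summable (eL lam R t x) := summable_of_isBigO_nat summable_geometric_two
    ((eL_isBigO_pow h0 hub hR t x one_half_pos).mono le_top)
  have htail : Tendsto (tailIntegral lam R t x) atTop (𝓝 0) :=
    ((tailIntegral_isBigO_pow h0 hub hR t x one_half_pos).mono le_top).trans_tendsto
      (tendsto_pow_atTop_nhds_zero_of_lt_one one_half_pos.le one_half_lt_one)
  rw [hsummable.hasSum_iff_tendsto_nat]
  simp only [eL_eq_tailIntegral_sub h0 hub hR, Finset.sum_range_sub',
    tailIntegral_zero (fun k => (h0 k).ne') (((h0 0).trans_le (hub 0)).trans hR)]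
  simpa using htail.const_sub 1

theorem isRateKernel_eL (h0 : ∀ k, 0 < lam k) (hub : ∀ k, lam k ≤ M) (hR : M < R) (t : ℝ) :
    IsRateKernel lam (eL lam R t) where
  isBigO_pow x _ hρ := eL_isBigO_pow h0 hub hR t x hρ
  hasSum_one x := hasSum_eL h0 hub hR t x
  intertwining x z := by
    rw [cumulative_eL h0 hub hR, cumulative_eL h0 hub hR, sub_sub_sub_cancel_left]
    exact mul_tailIntegral_succ_sub h0 hub hR t x z

end Contour

theorem stmt_10_general (lam : ℕ → ℝ) (s M : ℝ) (hs : 0 < s)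
    (hlb : ∀ x, s ≤ lam x) (hub : ∀ x, lam x ≤ M)
    (R : ℝ) (hR : M < R) (N : ℕ) (t : ℝ)
    (y : Fin N → ℕ) (x : Fin (N + 1) → ℕ) (hy : StrictMono y) :
    HasSum (fun p : {p : (Fin N → ℕ) × (Fin (N + 1) → ℕ) // Interlace p.1 p.2} =>
      Ut lam R t N y x p.1.1 p.1.2 * (hfun lam N p.1.1 : ℂ)) (hfun lam N y) :=
  (isRateKernel_eL (fun k => hs.trans_le (hlb k)) hub hR t).hasSum_twoLevelKernel_mul_hfun
    hs hlb hy x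

/-- the function (y,x) ↦ 𝔥_N(y) on W^{N,N+1} is harmonic for the
two-level kernel: Σ_{(y',x') ∈ W^{N,N+1}} U_t^{N,N+1}[(y,x),(y',x')] 𝔥_N(y') = 𝔥_N(y),
the series converging absolutely. -/
theorem stmt_10 (lam : ℕ → ℝ) (s M : ℝ) (hs : 0 < s)
    (hlb : ∀ x, s ≤ lam x) (hub : ∀ x, lam x ≤ M)
    (R : ℝ) (hR : M < R) (N : ℕ) (hN : 1 ≤ N) (t : ℝ) (ht : 0 ≤ t)
    (y : Fin N → ℕ) (x : Fin (N + 1) → ℕ) (hyx : Interlace y x) :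
    HasSum (fun p : { p : (Fin N → ℕ) × (Fin (N + 1) → ℕ) // Interlace p.1 p.2 } =>
        Ut lam R t N y x p.1.1 p.1.2 * (hfun lam N p.1.1 : ℂ))
      ((hfun lam N y : ℂ)) ∧
    Summable (fun p : { p : (Fin N → ℕ) × (Fin (N + 1) → ℕ) // Interlace p.1 p.2 } =>
        ‖Ut lam R t N y x p.1.1 p.1.2 * (hfun lam N p.1.1 : ℂ)‖) :=
  have h := stmt_10_general lam s M hs hlb hub R hR N t y x hyx.strictMono_left
  ⟨h, h.summable.norm⟩
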